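/- Let (R, m) be an unmixed Noetherian local ring of dimension d which is an image of a Cohen-Macaulay local ring, let x = x_1, ..., x_d be a system of parameters of R, and let S be an S_2-ification of R. Then (x)^lim = (x)^lim_S ∩ R, where (x)^lim_S denotes the limit closure of the sequence x in S regarded as an R-module. -/

import Mathlib

/-!
Since `Ann (S / R)` has height at least two, `dim (S / R) ≤ d - 2`, and hence the map
`H^d_m(R) → H^d_m(S)` is injective; the limit closure is the kernel of the natural map from a module
to the direct system defining its top local cohomology. The argument below makes this explicit, with
any injection `φ : N → M` such that `Ann (M / φ N)` has height at least two in place of `R ⊆ S`.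

Let `z = x ^ (n + 1)` and let `u = (∏ xᵢ) ^ n • m` satisfy `φ u ∈ (z) M`. Prime avoidance yields a
system of parameters `y = A z` inside `(z)` such that every `∏_{j ≠ i} yⱼ` kills `M / φ N`, because
two of the `yⱼ` do. By Cramer's rule `det A • φ u ∈ (y) M`, and multiplying by `∏ yᵢ`, which turns
`yᵢ` into `yᵢ² ∏_{j ≠ i} yⱼ`, moves this relation into `(y²) N`. Thus `det A • u` lies in the limit
closure of `y`.

To return from `y` to `z`, choose `B` with `B y ^ (n + 1) = z ^ (k + 1)`, where `n` is now the
exponent witnessing the last membership. Two matrices sending `z` to the same vector `w` have the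
same determinant modulo `(w²) : ∏ wᵢ`: swap one row at a time and apply Cramer's rule to the
difference, which kills one coordinate of `w`. Comparing `B * diag(y ^ n) * A` with `diag(z ^ k)`
turns the membership into `(∏ zᵢ) ^ k • u ∈ (z ^ (k + 1))^lim`.
-/

open IsLocalRing

set_option synthInstance.maxHeartbeats 1000000
set_option maxHeartbeats 1000000

/-- The limit closure `(x)^lim_M = ⋃_{n>0} ((x₁^{n+1}, …, x_r^{n+1})M :_M (x₁⋯x_r)^n)` of a
sequence `x = x₁, …, x_r` of elements of `R` in the `R`-module `M`; the union of the
increasing family of submodules is expressed as a supremum. -/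
def limitClosure {R : Type*} [CommRing R] {M : Type*} [AddCommGroup M] [Module R M]
    {r : ℕ} (x : Fin r → R) : Submodule R M :=
  ⨆ n : ℕ, (Ideal.span (Set.range fun i => x i ^ (n + 2)) • (⊤ : Submodule R M)).comap
    (LinearMap.lsmul R M ((∏ i, x i) ^ (n + 1)))

/-- The dimension of a module `M`: the Krull dimension of `R ⧸ Ann M`. -/
noncomputable def moduleDim (R M : Type*) [CommRing R] [AddCommGroup M] [Module R M] :
    WithBot ℕ∞ :=
  ringKrullDim (R ⧸ Module.annihilator R M)

/-- A system of parameters of a Noetherian local ring `R` of dimension `t`: a sequence of `t`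
elements of the maximal ideal generating an ideal primary to the maximal ideal. -/
def IsSOP (R : Type*) [CommRing R] [IsLocalRing R] {t : ℕ} (x : Fin t → R) : Prop :=
  (∀ i, x i ∈ maximalIdeal R) ∧ (Ideal.span (Set.range x)).radical = maximalIdeal R

/-- A Noetherian local ring `(R, m)` is unmixed if `dim R̂/P = dim R̂` for every associated
prime `P` of the `m`-adic completion `R̂` of `R`. -/
def IsUnmixedLocalRing (R : Type*) [CommRing R] [IsLocalRing R] : Prop :=
  ∀ P ∈ associatedPrimes (AdicCompletion (maximalIdeal R) R)
      (AdicCompletion (maximalIdeal R) R),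
    ringKrullDim ((AdicCompletion (maximalIdeal R) R) ⧸ P) =
      ringKrullDim (AdicCompletion (maximalIdeal R) R)

/-- A (Noetherian, local) ring is Cohen–Macaulay if it admits a regular sequence whose length
equals its Krull dimension. -/
def IsCohenMacaulayRing (A : Type*) [CommRing A] : Prop :=
  ∃ rs : List A, RingTheory.Sequence.IsRegular A rs ∧
    (rs.length : WithBot ℕ∞) = ringKrullDim A

/-- Serre's condition `S₂` for an `R`-module `N`: for every prime `p`, the depth of the
localization `N_p` over `R_p` is at least `min (2, dim N_p)`, expressed via the existence of
regular sequences in the maximal ideal of `R_p`. -/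
def HasSerreS2 (R N : Type*) [CommRing R] [AddCommGroup N] [Module R N] : Prop :=
  ∀ (p : PrimeSpectrum R) (n : ℕ),
    (n : WithBot ℕ∞) ≤
        min 2 (moduleDim (Localization.AtPrime p.asIdeal)
          (LocalizedModule p.asIdeal.primeCompl N)) →
      ∃ rs : List (Localization.AtPrime p.asIdeal),
        rs.length = n ∧ (∀ c ∈ rs, c ∈ maximalIdeal (Localization.AtPrime p.asIdeal)) ∧
        RingTheory.Sequence.IsRegular (LocalizedModule p.asIdeal.primeCompl N) rs

/-- For an element `s` of the total quotient ring of `R`, the ideal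
`D(s) = {r ∈ R : r·s ∈ R}`. -/
def denominatorIdeal (R : Type*) [CommRing R] (s : FractionRing R) : Ideal R :=
  (LinearMap.range (Algebra.linearMap R (FractionRing R))).comap
    (LinearMap.toSpanSingleton R (FractionRing R) s)

open Matrix

section LimitClosure

variable {R M N : Type*} [CommRing R] [AddCommGroup M] [Module R M] [AddCommGroup N] [Module R N]

theorem smul_mem_smul_of_forall_mul_mem {c : R} {I J : Ideal R} (h : ∀ a ∈ I, c * a ∈ J)
    {P : Submodule R M} {m : M} (hm : m ∈ I • P) : c • m ∈ J • P := by
  have hmem : c • m ∈ Ideal.span {c} • I • P :=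
    Submodule.smul_mem_smul (Ideal.mem_span_singleton_self c) hm
  rw [← Submodule.mul_smul] at hmem
  exact Submodule.smul_mono_left (Ideal.span_singleton_mul_le_iff.2 h) hmem

theorem radical_span_range_pow {ι : Type*} (x : ι → R) {n : ℕ} (hn : n ≠ 0) :
    (Ideal.span (Set.range fun i => x i ^ n)).radical = (Ideal.span (Set.range x)).radical := by
  refine le_antisymm (Ideal.radical_mono ?_) (Ideal.radical_le_radical_iff.2 ?_) <;>
    rw [Ideal.span_le] <;> rintro _ ⟨i, rfl⟩
  · exact Ideal.pow_mem_of_mem _ (Ideal.subset_span (Set.mem_range_self i)) n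
      (Nat.pos_of_ne_zero hn)
  · exact ⟨n, Ideal.subset_span (Set.mem_range_self i)⟩

theorem prod_mul_mem_span_range_pow_succ {ι : Type*} [Fintype ι] (x : ι → R) (n : ℕ) {a : R}
    (ha : a ∈ Ideal.span (Set.range fun i => x i ^ n)) :
    (∏ i, x i) * a ∈ Ideal.span (Set.range fun i => x i ^ (n + 1)) := by
  obtain ⟨c, rfl⟩ := Ideal.mem_span_range_iff_exists_fun.1 ha
  rw [Finset.mul_sum]
  refine Ideal.sum_mem _ fun i _ => Ideal.mem_of_dvd _ ?_ (Ideal.subset_span ⟨i, rfl⟩)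
  beta_reduce
  rw [pow_succ']
  exact mul_dvd_mul (Finset.dvd_prod_of_mem x (Finset.mem_univ i)) (dvd_mul_left _ _)

theorem mem_limitClosure_iff {r : ℕ} {x : Fin r → R} {m : M} :
    m ∈ limitClosure x ↔ ∃ n : ℕ, (∏ i, x i) ^ n • m ∈
      Ideal.span (Set.range fun i => x i ^ (n + 1)) • (⊤ : Submodule R M) := by
  have hstep (n : ℕ) {m : M} (h : (∏ i, x i) ^ n • m ∈
      Ideal.span (Set.range fun i => x i ^ (n + 1)) • (⊤ : Submodule R M)) :
      (∏ i, x i) ^ (n + 1) • m ∈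
        Ideal.span (Set.range fun i => x i ^ (n + 2)) • (⊤ : Submodule R M) := by
    rw [pow_succ', mul_smul]
    exact smul_mem_smul_of_forall_mul_mem (fun _ => prod_mul_mem_span_range_pow_succ x (n + 1)) h
  rw [limitClosure, Submodule.mem_iSup_of_directed _ (monotone_nat_of_le_succ fun n _ hn =>
    hstep (n + 1) hn).directed_le]
  exact ⟨fun ⟨n, hn⟩ => ⟨n + 1, hn⟩, fun ⟨n, hn⟩ => ⟨n, hstep n hn⟩⟩

theorem mem_limitClosure_of_prod_pow_smul_mem {r : ℕ} {x : Fin r → R} {n : ℕ} {m : M}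
    (hm : (∏ i, x i) ^ n • m ∈ limitClosure fun i => x i ^ (n + 1)) : m ∈ limitClosure x := by
  obtain ⟨k, hk⟩ := mem_limitClosure_iff.1 hm
  refine mem_limitClosure_iff.2 ⟨(n + 1) * k + n, ?_⟩
  rw [Finset.prod_pow, ← pow_mul, smul_smul, ← pow_add] at hk
  have hexp : (n + 1) * (k + 1) = (n + 1) * k + n + 1 := by ring
  simpa only [← pow_mul, hexp] using hk

theorem limitClosure_le_comap {r : ℕ} (x : Fin r → R) (φ : N →ₗ[R] M) :
    limitClosure x ≤ (limitClosure x).comap φ := by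
  intro m hm
  obtain ⟨n, hn⟩ := mem_limitClosure_iff.1 hm
  refine mem_limitClosure_iff.2 ⟨n, ?_⟩
  rw [← map_smul]
  exact Submodule.smul_top_le_comap_smul_top _ φ hn

end LimitClosure

section Determinants

variable {R ι : Type*} [CommRing R] [Fintype ι]

theorem exists_mulVec_eq_of_forall_mem_span_range {κ : Type*} {z : ι → R} {y : κ → R}
    (h : ∀ i, y i ∈ Ideal.span (Set.range z)) : ∃ A : Matrix κ ι R, A *ᵥ z = y := by
  choose A hA using fun i => Ideal.mem_span_range_iff_exists_fun.1 (h i)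
  exact ⟨A, funext hA⟩

variable [DecidableEq ι]

theorem det_mul_mem_span_range_mulVec (A : Matrix ι ι R) {z : ι → R} {a : R}
    (ha : a ∈ Ideal.span (Set.range z)) : A.det * a ∈ Ideal.span (Set.range (A *ᵥ z)) := by
  obtain ⟨c, rfl⟩ := Ideal.mem_span_range_iff_exists_fun.1 ha
  have hcramer : A.det • z = A.adjugate *ᵥ (A *ᵥ z) := by
    rw [mulVec_mulVec, adjugate_mul, smul_mulVec, one_mulVec]
  refine Ideal.mem_span_range_iff_exists_fun.2 ⟨c ᵥ* A.adjugate, ?_⟩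
  change (c ᵥ* A.adjugate) ⬝ᵥ (A *ᵥ z) = A.det * (c ⬝ᵥ z)
  rw [← dotProduct_mulVec, ← hcramer, dotProduct_smul, smul_eq_mul]

theorem prod_mul_det_mem_span_range_sq {F : Matrix ι ι R} {z w : ι → R} {a : ι}
    (hF : F *ᵥ z = Function.update w a 0) (hw : w a ∈ Ideal.span (Set.range z)) :
    (∏ i, w i) * F.det ∈ Ideal.span (Set.range fun i => w i ^ 2) := by
  have hdet : F.det * w a ∈ Ideal.span (Set.range (Function.update w a 0)) :=
    hF ▸ det_mul_mem_span_range_mulVec F hw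
  obtain ⟨c, hc⟩ := Ideal.mem_span_range_iff_exists_fun.1 hdet
  rw [← Finset.prod_erase_mul _ _ (Finset.mem_univ a), mul_assoc, mul_comm (w a), ← hc,
    Finset.mul_sum]
  refine Ideal.sum_mem _ fun i _ => ?_
  obtain rfl | hi := eq_or_ne i a
  · simp
  · refine Ideal.mem_of_dvd _ ?_ (Ideal.subset_span ⟨i, rfl⟩)
    beta_reduce
    rw [Function.update_of_ne hi, sq]
    exact mul_dvd_mul
      (Finset.dvd_prod_of_mem w (Finset.mem_erase.2 ⟨hi, Finset.mem_univ i⟩)) (dvd_mul_left _ _)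

theorem prod_mul_det_sub_det_updateRow_mem_span_range_sq {z w : ι → R} {E : Matrix ι ι R}
    (hE : E *ᵥ z = w) {a : ι} {v : ι → R} (hv : v ⬝ᵥ z = w a) :
    (∏ i, w i) * (E.det - (E.updateRow a v).det) ∈
      Ideal.span (Set.range fun i => w i ^ 2) := by
  have hdet : E.det - (E.updateRow a v).det = (E.updateRow a (E a - v)).det := by
    have h := det_updateRow_add E a (E a - v) v
    rw [sub_add_cancel, updateRow_eq_self] at h
    rw [h, add_sub_cancel_right]
  rw [hdet]
  refine prod_mul_det_mem_span_range_sq (z := z) (funext fun i => ?_)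
    (Ideal.mem_span_range_iff_exists_fun.2 ⟨v, hv⟩)
  obtain rfl | hi := eq_or_ne i a
  · have hEi : E i ⬝ᵥ z = w i := congrFun hE i
    simp only [mulVec, updateRow_self, sub_dotProduct, hEi, hv, sub_self, Function.update_self]
  · rw [Function.update_of_ne hi, ← hE, mulVec, updateRow_ne hi, mulVec]

theorem prod_mul_det_sub_det_mem_span_range_sq {z w : ι → R} {C D : Matrix ι ι R}
    (hC : C *ᵥ z = w) (hD : D *ᵥ z = w) :
    (∏ i, w i) * (C.det - D.det) ∈ Ideal.span (Set.range fun i => w i ^ 2) := by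
  let E (s : Finset ι) : Matrix ι ι R := of fun i j => if i ∈ s then D i j else C i j
  have hEz (s : Finset ι) : E s *ᵥ z = w := by
    ext i
    by_cases hi : i ∈ s
    · simpa only [E, mulVec, of_apply, hi, if_true] using congrFun hD i
    · simpa only [E, mulVec, of_apply, hi, if_false] using congrFun hC i
  have hE_empty : E ∅ = C := by
    ext i j
    simp [E]
  have hE_insert (a : ι) (s : Finset ι) : E (insert a s) = (E s).updateRow a (D a) := by
    ext i j
    obtain rfl | hi := eq_or_ne i a
    · simp [E]
    · simp [E, hi]
  have hE (s : Finset ι) : (∏ i, w i) * (C.det - (E s).det) ∈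
      Ideal.span (Set.range fun i => w i ^ 2) := by
    induction s using Finset.induction_on with
    | empty => simp [hE_empty]
    | insert a s _ ih =>
      have hswap := prod_mul_det_sub_det_updateRow_mem_span_range_sq (hEz s) (congrFun hD a)
      have hadd := Ideal.add_mem _ ih hswap
      rwa [← mul_add, sub_add_sub_cancel, ← hE_insert] at hadd
  have hE_univ : E Finset.univ = D := by
    ext i j
    simp [E]
  exact hE_univ ▸ hE Finset.univ

section TransitionMatrix

variable {M : Type*} [AddCommGroup M] [Module R M] {r : ℕ} {z : Fin r → R} {m : M}

theorem mem_limitClosure_of_mulVec_eq_pow {C : Matrix (Fin r) (Fin r) R} {k : ℕ}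
    (hC : C *ᵥ z = fun i => z i ^ (k + 1))
    (hm : C.det • m ∈ Ideal.span (Set.range fun i => z i ^ (k + 1)) • (⊤ : Submodule R M)) :
    m ∈ limitClosure z := by
  set w : Fin r → R := fun i => z i ^ (k + 1)
  set J := Ideal.span (Set.range fun i => w i ^ 2)
  have hdiag : diagonal (fun i => z i ^ k) *ᵥ z = w := by
    ext i
    rw [mulVec_diagonal, ← pow_succ]
  have hdet : (∏ i, w i) * (C.det - (∏ i, z i) ^ k) ∈ J := by
    simpa only [det_diagonal, Finset.prod_pow] using
      prod_mul_det_sub_det_mem_span_range_sq hC hdiag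
  have hCm : (∏ i, w i) • C.det • m ∈ J • (⊤ : Submodule R M) :=
    smul_mem_smul_of_forall_mul_mem
      (fun _ ha => prod_mul_mem_span_range_pow_succ w 1 (by simpa only [pow_one] using ha)) hm
  have hsub := Submodule.sub_mem _ hCm
    (Submodule.smul_mem_smul hdet (Submodule.mem_top (x := m)))
  refine mem_limitClosure_of_prod_pow_smul_mem (n := k) (mem_limitClosure_iff.2 ⟨1, ?_⟩)
  convert hsub using 1
  rw [pow_one, smul_smul, smul_smul, ← sub_smul]
  congr 1
  ring

theorem mem_limitClosure_of_det_smul_mem (A : Matrix (Fin r) (Fin r) R)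
    (hz : Ideal.span (Set.range z) ≤ (Ideal.span (Set.range (A *ᵥ z))).radical)
    (hm : A.det • m ∈ limitClosure (A *ᵥ z)) : m ∈ limitClosure z := by
  obtain ⟨n, hn⟩ := mem_limitClosure_iff.1 hm
  set y := A *ᵥ z with hy
  rw [← radical_span_range_pow y n.succ_ne_zero] at hz
  obtain ⟨k, hk⟩ := Ideal.exists_pow_le_of_le_radical_of_fg hz
    (Submodule.fg_span (Set.finite_range z))
  have hzk (i : Fin r) : z i ^ (k + 1) ∈ Ideal.span (Set.range fun i => y i ^ (n + 1)) :=
    (Ideal.pow_le_pow_right k.le_succ).trans hk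
      (Ideal.pow_mem_pow (Ideal.subset_span (Set.mem_range_self i)) _)
  obtain ⟨B, hB⟩ := exists_mulVec_eq_of_forall_mem_span_range hzk
  refine mem_limitClosure_of_mulVec_eq_pow (C := B * (diagonal (fun i => y i ^ n) * A)) (k := k)
    ?_ ?_
  · rw [← mulVec_mulVec, ← mulVec_mulVec, ← hy, ← hB]
    congr 1
    ext i
    rw [mulVec_diagonal, pow_succ]
  · rw [det_mul, det_mul, det_diagonal, Finset.prod_pow, mul_smul, mul_smul]
    exact smul_mem_smul_of_forall_mul_mem (fun a ha => hB ▸ det_mul_mem_span_range_mulVec B ha) hn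

end TransitionMatrix

end Determinants

section Height

variable {R : Type*} [CommRing R]

theorem le_height_iff_forall_isPrime {I : Ideal R} {n : ℕ∞} :
    n ≤ I.height ↔ ∀ p : Ideal R, p.IsPrime → I ≤ p → n ≤ p.height := by
  refine ⟨fun h p _ hp => h.trans (Ideal.height_mono hp), fun h => ?_⟩
  rw [I.height_eq_inf_minimalPrimes]
  exact le_iInf₂ fun p hp => h p hp.isPrime hp.le

theorem le_height_inf {I J : Ideal R} {n : ℕ∞} (hI : n ≤ I.height) (hJ : n ≤ J.height) :
    n ≤ (I ⊓ J).height :=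
  le_height_iff_forall_isPrime.2 fun _ hp h => (hp.inf_le.1 h).elim
    (fun hIp => hI.trans (Ideal.height_mono hIp)) fun hJp => hJ.trans (Ideal.height_mono hJp)

theorem le_height_annihilator_of_forall {M : Type*} [AddCommGroup M] [Module R M]
    [Module.Finite R M] {n : ℕ∞}
    (h : ∀ m : M, m ≠ 0 → n ≤ (Submodule.span R {m}).annihilator.height) :
    n ≤ (Module.annihilator R M).height := by
  refine le_height_iff_forall_isPrime.2 fun p hp hle => ?_
  have hsupp : (⟨p, hp⟩ : PrimeSpectrum R) ∈ Module.support R M :=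
    Module.mem_support_iff_of_finite.2 hle
  obtain ⟨m, hm⟩ := Module.mem_support_iff_exists_annihilator.1 hsupp
  refine (h m ?_).trans (Ideal.height_mono hm)
  rintro rfl
  exact hp.ne_top (top_le_iff.1 (le_trans (by simp [Submodule.annihilator_bot]) hm))

variable [IsNoetherianRing R]

theorem exists_mem_le_height_sup_span_singleton {I J : Ideal R} {n : ℕ}
    (hI : n ≤ I.height) (hJ : n + 1 ≤ J.height) :
    ∃ a ∈ J, n + 1 ≤ (I ⊔ Ideal.span {a}).height := by
  have hfin : {p ∈ I.minimalPrimes | p.height = n}.Finite :=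
    I.finite_minimalPrimes_of_isNoetherianRing.subset (Set.sep_subset _ _)
  have havoid : ¬ (J : Set R) ⊆ ⋃ p ∈ {p ∈ I.minimalPrimes | p.height = n}, (p : Set R) := by
    refine (Ideal.subset_union_prime_finite hfin (f := fun p => p) ⊥ ⊥
      fun p hp _ _ => hp.1.isPrime).not.2 ?_
    rintro ⟨p, ⟨-, hpn⟩, hJp⟩
    exact (ENat.add_one_le_iff (ENat.natCast_ne_top n)).1 (hJ.trans (Ideal.height_mono hJp)) |>.ne'
      hpn
  obtain ⟨a, haJ, ha⟩ := Set.not_subset.1 havoid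
  refine ⟨a, haJ, le_height_iff_forall_isPrime.2 fun p hp hle => ?_⟩
  obtain ⟨hIp, hap⟩ := sup_le_iff.1 hle
  refine Order.add_one_le_of_lt ((hI.trans (Ideal.height_mono hIp)).lt_of_ne fun hpn => ha ?_)
  exact Set.mem_biUnion ⟨Ideal.mem_minimalPrimes_of_height_le hIp (hpn ▸ hI), hpn.symm⟩
    ((Ideal.span_singleton_le_iff_mem p).1 hap)

theorem exists_forall_mem_le_height_span_range {n : ℕ} (J : Fin n → Ideal R)
    (hJ : ∀ i : Fin n, ((i + 1 : ℕ) : ℕ∞) ≤ (J i).height) :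
    ∃ y : Fin n → R, (∀ i, y i ∈ J i) ∧ n ≤ (Ideal.span (Set.range y)).height := by
  induction n with
  | zero => exact ⟨Fin.elim0, fun i => i.elim0, by simp⟩
  | succ n ih =>
    obtain ⟨y, hyJ, hy⟩ := ih (fun i => J i.castSucc) fun i => hJ i.castSucc
    obtain ⟨a, haJ, ha⟩ := exists_mem_le_height_sup_span_singleton hy
      (by exact_mod_cast hJ (Fin.last n))
    refine ⟨Fin.snoc y a, Fin.lastCases (by simpa using haJ) (by simpa using hyJ), ?_⟩
    rw [Fin.range_snoc, Ideal.span_insert, sup_comm]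
    exact_mod_cast ha

variable [IsLocalRing R]

theorem ringKrullDim_le_height_iff_maximalIdeal_le_radical {I : Ideal R} :
    ringKrullDim R ≤ I.height ↔ maximalIdeal R ≤ I.radical := by
  rw [← maximalIdeal_height_eq_ringKrullDim, WithBot.coe_le_coe, le_height_iff_forall_isPrime,
    Ideal.radical_eq_sInf, le_sInf_iff]
  constructor
  · rintro h p ⟨hIp, hp⟩
    exact (Ideal.eq_of_le_of_height_le _ (le_maximalIdeal hp.ne_top) (h p hp hIp)).ge
  · exact fun h p hp hIp => Ideal.height_mono (h p ⟨hIp, hp⟩)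

theorem exists_parameters_forall_prod_erase_mem {d : ℕ} (hdim : ringKrullDim R = d)
    {I Q : Ideal R} (hI : 2 ≤ I.height) (hQ : maximalIdeal R ≤ Q.radical) :
    ∃ y : Fin d → R, (∀ i, y i ∈ Q) ∧ maximalIdeal R ≤ (Ideal.span (Set.range y)).radical ∧
      ∀ i, ∏ j ∈ Finset.univ.erase i, y j ∈ I := by
  have hQd : d ≤ Q.height := by
    rw [← ringKrullDim_le_height_iff_maximalIdeal_le_radical, hdim] at hQ
    exact_mod_cast hQ
  have hQsucc (i : Fin d) : ((i + 1 : ℕ) : ℕ∞) ≤ Q.height :=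
    le_trans (by exact_mod_cast i.isLt) hQd
  obtain ⟨y, hyJ, hy⟩ := exists_forall_mem_le_height_span_range
    (fun i : Fin d => if (i : ℕ) < 2 then I ⊓ Q else Q) fun i => by
      split_ifs with hi
      · exact le_height_inf (le_trans (by exact_mod_cast hi) hI) (hQsucc i)
      · exact hQsucc i
  have hyQ (i : Fin d) : y i ∈ Q := by
    have := hyJ i
    split_ifs at this
    exacts [this.2, this]
  have hyI (i : Fin d) (hi : (i : ℕ) < 2) : y i ∈ I := by
    have := hyJ i
    rw [if_pos hi] at this
    exact this.1
  refine ⟨y, hyQ, ?_, fun i => ?_⟩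
  · rw [← ringKrullDim_le_height_iff_maximalIdeal_le_radical, hdim]
    exact_mod_cast hy
  -- If `d < 2` there are not two parameters to put in `I`, but then `I = ⊤`, of height `⊤`.
  by_cases hItop : I = ⊤
  · exact hItop ▸ Submodule.mem_top
  have hd : 2 ≤ d := by
    have h := Ideal.height_le_ringKrullDim_of_ne_top hItop
    rw [hdim] at h
    exact ENat.natCast_le_natCast.1 (hI.trans (WithBot.coe_le_coe.1 h))
  obtain ⟨j, hj, hji⟩ : ∃ j : Fin d, (j : ℕ) < 2 ∧ j ≠ i := by
    by_cases hi : (i : ℕ) = 0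
    · exact ⟨⟨1, hd⟩, Nat.one_lt_two, fun h => by simp [← h] at hi⟩
    · exact ⟨⟨0, by lia⟩, Nat.two_pos, fun h => by simp [← h] at hi⟩
  exact Ideal.mem_of_dvd _
    (Finset.dvd_prod_of_mem y (Finset.mem_erase.2 ⟨hji, Finset.mem_univ j⟩)) (hyI j hj)

end Height

section Descent

variable {R N M : Type*} [CommRing R] [AddCommGroup N] [Module R N] [AddCommGroup M] [Module R M]

theorem annihilator_quotient_smul_top_le (P : Submodule R M) :
    Module.annihilator R (M ⧸ P) • (⊤ : Submodule R M) ≤ P :=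
  Submodule.smul_le.2 fun _ ha m _ =>
    (Submodule.Quotient.mk_eq_zero P).1 (Module.mem_annihilator.1 ha (Submodule.Quotient.mk m))

theorem prod_mul_mem_span_range_sq_mul {ι : Type*} [Fintype ι] [DecidableEq ι] {y : ι → R}
    {I : Ideal R} (hy : ∀ i, ∏ j ∈ Finset.univ.erase i, y j ∈ I) {a : R}
    (ha : a ∈ Ideal.span (Set.range y)) :
    (∏ i, y i) * a ∈ Ideal.span (Set.range fun i => y i ^ 2) * I := by
  obtain ⟨c, rfl⟩ := Ideal.mem_span_range_iff_exists_fun.1 ha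
  rw [Finset.mul_sum]
  refine Ideal.sum_mem _ fun i _ => ?_
  have hsq : y i ^ 2 ∈ Ideal.span (Set.range fun i => y i ^ 2) :=
    Ideal.subset_span (Set.mem_range_self i)
  convert Ideal.mul_mem_left _ (c i) (Ideal.mul_mem_mul hsq (hy i)) using 1
  rw [← Finset.mul_prod_erase _ _ (Finset.mem_univ i)]
  ring

theorem prod_smul_mem_of_map_mem {φ : N →ₗ[R] M} (hφ : Function.Injective φ)
    {ι : Type*} [Fintype ι] [DecidableEq ι] {y : ι → R}
    (hy : ∀ i, ∏ j ∈ Finset.univ.erase i, y j ∈ Module.annihilator R (M ⧸ LinearMap.range φ))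
    {u : N} (hu : φ u ∈ Ideal.span (Set.range y) • (⊤ : Submodule R M)) :
    (∏ i, y i) • u ∈ Ideal.span (Set.range fun i => y i ^ 2) • (⊤ : Submodule R N) := by
  have hmem := smul_mem_smul_of_forall_mul_mem (fun _ => prod_mul_mem_span_range_sq_mul hy) hu
  rw [Submodule.mul_smul, ← map_smul] at hmem
  have hrange := Submodule.smul_mono le_rfl (annihilator_quotient_smul_top_le _) hmem
  rw [LinearMap.range_eq_map, ← Submodule.map_smul''] at hrange
  obtain ⟨v, hv, hvu⟩ := hrange
  exact hφ hvu ▸ hv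

theorem limitClosure_eq_limitClosure_s2ification_inter_general
    [IsNoetherianRing R] [IsLocalRing R] {d : ℕ} (hdim : ringKrullDim R = d)
    {φ : N →ₗ[R] M} (hφ : Function.Injective φ)
    (hheight : 2 ≤ (Module.annihilator R (M ⧸ LinearMap.range φ)).height)
    {x : Fin d → R} (hx : IsSOP R x) :
    limitClosure x = (limitClosure x).comap φ := by
  refine le_antisymm (limitClosure_le_comap x φ) fun m hm => ?_
  obtain ⟨n, hn⟩ := mem_limitClosure_iff.1 hm
  rw [← map_smul] at hn
  set z : Fin d → R := fun i => x i ^ (n + 1)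
  have hzm : Ideal.span (Set.range z) ≤ maximalIdeal R := by
    rw [← hx.2, ← radical_span_range_pow x n.succ_ne_zero]
    exact Ideal.le_radical
  have hmz : maximalIdeal R ≤ (Ideal.span (Set.range z)).radical := by
    rw [radical_span_range_pow x n.succ_ne_zero, hx.2]
  obtain ⟨y, hyz, hmy, hyI⟩ := exists_parameters_forall_prod_erase_mem hdim hheight hmz
  obtain ⟨A, rfl⟩ := exists_mulVec_eq_of_forall_mem_span_range hyz
  have hdet : φ (A.det • (∏ i, x i) ^ n • m) ∈
      Ideal.span (Set.range (A *ᵥ z)) • (⊤ : Submodule R M) := by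
    rw [map_smul]
    exact smul_mem_smul_of_forall_mul_mem (fun _ => det_mul_mem_span_range_mulVec A) hn
  refine mem_limitClosure_of_prod_pow_smul_mem
    (mem_limitClosure_of_det_smul_mem A (hzm.trans hmy) (mem_limitClosure_iff.2 ⟨1, ?_⟩))
  rw [pow_one]
  exact prod_smul_mem_of_map_mem hφ hyI hdet

end Descent

theorem le_height_annihilator_quotient_range {R : Type*} [CommRing R] {n : ℕ∞}
    (S : Subalgebra R (FractionRing R)) [Module.Finite R S]
    (hheight : ∀ s : FractionRing R, s ∈ S →
      s ∉ Set.range (algebraMap R (FractionRing R)) →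
      ∀ p : PrimeSpectrum R, denominatorIdeal R s ≤ p.asIdeal → n ≤ Order.height p) :
    n ≤ (Module.annihilator R (S ⧸ LinearMap.range (Algebra.linearMap R S))).height := by
  refine le_height_annihilator_of_forall fun q hq => ?_
  obtain ⟨s, rfl⟩ := Submodule.Quotient.mk_surjective _ q
  refine le_height_iff_forall_isPrime.2 fun p hp hle => ?_
  rw [PrimeSpectrum.height_eq_orderHeight ⟨p, hp⟩]
  refine hheight s s.2 ?_ ⟨p, hp⟩ (le_trans ?_ hle)
  · rintro ⟨b, hb⟩
    exact hq ((Submodule.Quotient.mk_eq_zero _).2 ⟨b, Subtype.ext hb⟩)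
  · rintro a ⟨b, hb⟩
    rw [Submodule.mem_annihilator_span_singleton, ← Submodule.Quotient.mk_smul,
      Submodule.Quotient.mk_eq_zero]
    exact ⟨b, Subtype.ext hb⟩

/-- Let `(R, m)` be an unmixed Noetherian local ring of dimension `d` which is an image of a
Cohen–Macaulay local ring, `x = x₁, …, x_d` a system of parameters of `R`, and `S` an
`S₂`-ification of `R`: a subring of the total quotient ring of `R` containing `R` which is
module-finite over `R`, satisfies Serre's condition `S₂` as an `R`-module, and is such that
`D(s)` has height at least two for every `s ∈ S \ R`.  Then `(x)^lim = (x)^lim_S ∩ R`. -/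
theorem limitClosure_eq_limitClosure_s2ification_inter
    {R : Type*} [CommRing R] [IsNoetherianRing R] [IsLocalRing R]
    {d : ℕ} (hdim : ringKrullDim R = d)
    (hunmixed : IsUnmixedLocalRing R)
    (A : Type*) [CommRing A] [IsNoetherianRing A] [IsLocalRing A]
    (hACM : IsCohenMacaulayRing A) (f : A →+* R) (hf : Function.Surjective f)
    (S : Subalgebra R (FractionRing R))
    (hfin : Module.Finite R S)
    (hS2 : HasSerreS2 R S)
    (hheight : ∀ s : FractionRing R, s ∈ S →
      s ∉ Set.range (algebraMap R (FractionRing R)) →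
      ∀ p : PrimeSpectrum R, denominatorIdeal R s ≤ p.asIdeal → 2 ≤ Order.height p)
    (x : Fin d → R) (hx : IsSOP R x) :
    limitClosure (M := R) x = (limitClosure (M := ↥S) x).comap (Algebra.linearMap R ↥S) := by
  have hinj : Function.Injective (Algebra.linearMap R S) :=
    fun _ _ hab => IsFractionRing.injective R (FractionRing R) (congrArg Subtype.val hab)
  exact limitClosure_eq_limitClosure_s2ification_inter_general hdim hinj
    (le_height_annihilator_quotient_range S hheight) hx
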